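/- For all integers l ≥ 0 and n ≥ 0, the character of finite Fibonacci-l configurations on n points equals χ^l_n(z,q) = P^l_{n+l}(z,q) = Σ_{m=0}^{⌊(n+l)/(l+1)⌋} z^m q^{(l+1)m(m-1)/2} [n + l - lm choose m]_q in ℤ[z,q]. -/

import Mathlib

open PowerSeries

/-- The set of finite Fibonacci-`l` configurations on `n` points: functions
`a : {0,…,n-1} → {0,1}` (encoded as `Fin n → Bool`) such that `a i + a j ≤ 1`
whenever `1 ≤ |i - j| ≤ l`. -/
def fibSet (l n : ℕ) : Finset (Fin n → Bool) :=
  Finset.univ.filter fun a =>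
    ∀ i j : Fin n, (i : ℕ) < (j : ℕ) → (j : ℕ) ≤ (i : ℕ) + l →
      ¬(a i = true ∧ a j = true)

/-- `(q)_n = ∏_{i=1}^{n} (1 - q^i)`, as a power series in `q` over `ℤ`. -/
noncomputable def qPoch (n : ℕ) : PowerSeries ℤ :=
  ∏ i ∈ Finset.range n, (1 - (PowerSeries.X : PowerSeries ℤ) ^ (i + 1))

/-- The Gaussian binomial coefficient `[N choose m]_q = (q)_N/((q)_m (q)_{N-m})`,
which is `0` when `m > N`; `(q)_m` and `(q)_{N-m}` have constant term `1`, hence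
are invertible, and `Ring.inverse` produces their inverses. -/
noncomputable def qBinom (N m : ℕ) : PowerSeries ℤ :=
  if m ≤ N then qPoch N * Ring.inverse (qPoch m) * Ring.inverse (qPoch (N - m)) else 0

/-- The character `χ^l_n(z,q) = Σ_{a ∈ Fib^l_n} z^{a_0+⋯+a_{n-1}} q^{0·a_0+⋯+(n-1)·a_{n-1}}`,
viewed in the ring `ℤ[[q]][z]` (into which `ℤ[z,q]` embeds), with `z` the
polynomial variable and `q` the power series variable. -/
noncomputable def fibChar (l n : ℕ) : Polynomial (PowerSeries ℤ) :=
  ∑ a ∈ fibSet l n,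
    (Polynomial.X : Polynomial (PowerSeries ℤ)) ^ (Finset.univ.filter fun i => a i = true).card *
      Polynomial.C ((PowerSeries.X : PowerSeries ℤ) ^
        (∑ i ∈ Finset.univ.filter (fun i => a i = true), (i : ℕ)))

theorem qPoch_isUnit (n : ℕ) : IsUnit (qPoch n) := by
  rw [PowerSeries.isUnit_iff_constantCoeff]
  simp [qPoch, map_prod]

theorem qPoch_succ (n : ℕ) : qPoch (n + 1) = qPoch n * (1 - PowerSeries.X ^ (n + 1)) := by
  simp [qPoch, Finset.prod_range_succ]

theorem qBinom_mul (a b : ℕ) : qBinom (a + b) b * (qPoch b * qPoch a) = qPoch (a + b) := by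
  have h1 := Ring.inverse_mul_cancel _ (qPoch_isUnit b)
  have h2 := Ring.inverse_mul_cancel _ (qPoch_isUnit a)
  rw [qBinom, if_pos (by omega), Nat.add_sub_cancel]
  calc _ = qPoch (a + b) * (Ring.inverse (qPoch b) * qPoch b) *
        (Ring.inverse (qPoch a) * qPoch a) := by ring
    _ = _ := by rw [h1, h2]; ring

theorem qBinom_gt {N m : ℕ} (h : N < m) : qBinom N m = 0 := by
  rw [qBinom, if_neg (by omega)]

theorem qBinom_zero (N : ℕ) : qBinom N 0 = 1 := by
  have h := qBinom_mul N 0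
  have h0 : qPoch 0 = 1 := by simp [qPoch]
  rw [h0, one_mul, Nat.add_zero] at h
  exact (qPoch_isUnit N).mul_right_cancel (by rw [h, one_mul])

theorem qBinom_self (N : ℕ) : qBinom N N = 1 := by
  have h := qBinom_mul 0 N
  have h0 : qPoch 0 = 1 := by simp [qPoch]
  rw [h0, mul_one, Nat.zero_add] at h
  exact (qPoch_isUnit N).mul_right_cancel (by rw [h, one_mul])

theorem qBinom_pascal (N m : ℕ) :
    qBinom (N + 1) (m + 1) = qBinom N (m + 1) + PowerSeries.X ^ (N - m) * qBinom N m := by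
  rcases lt_trichotomy N m with h | h | h
  · rw [qBinom_gt h, qBinom_gt (by omega), qBinom_gt (by omega)]; simp
  · subst h
    rw [qBinom_self, qBinom_self, qBinom_gt (by omega)]; simp
  · obtain ⟨d, rfl⟩ : ∃ d, N = d + 1 + m := ⟨N - m - 1, by omega⟩
    have e1 := qBinom_mul (d + 1) (m + 1)
    have e2 := qBinom_mul d (m + 1)
    have e3 := qBinom_mul (d + 1) m
    rw [show d + 1 + (m + 1) = d + 1 + m + 1 by ring] at e1
    rw [show d + (m + 1) = d + 1 + m by ring] at e2
    rw [show d + 1 + m - m = d + 1 by omega]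
    apply ((qPoch_isUnit (m + 1)).mul (qPoch_isUnit (d + 1))).mul_right_cancel
    rw [e1, add_mul, qPoch_succ (d + 1 + m), qPoch_succ d]
    rw [qPoch_succ d] at e3
    have : qBinom (d + 1 + m) (m + 1) *
        (qPoch (m + 1) * (qPoch d * (1 - PowerSeries.X ^ (d + 1)))) =
        qPoch (d + 1 + m) * (1 - PowerSeries.X ^ (d + 1)) := by rw [← e2]; ring
    rw [this, qPoch_succ m]
    have : PowerSeries.X ^ (d + 1) * qBinom (d + 1 + m) m *
        (qPoch m * (1 - PowerSeries.X ^ (m + 1)) * (qPoch d * (1 - PowerSeries.X ^ (d + 1)))) =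
        PowerSeries.X ^ (d + 1) * (1 - PowerSeries.X ^ (m + 1)) * qPoch (d + 1 + m) := by
      rw [← e3]; ring
    rw [this]; ring

/-- Coefficient of `z^m` in `P^l_N`. -/
noncomputable def pCoef (l N m : ℕ) : PowerSeries ℤ :=
  (PowerSeries.X : PowerSeries ℤ) ^ ((l + 1) * Nat.choose m 2) * qBinom (N - l * m) m

theorem pCoef_zero (l N : ℕ) : pCoef l N 0 = 1 := by simp [pCoef, qBinom_zero]

theorem pCoef_big {l N m : ℕ} (h : N < (l + 1) * m) : pCoef l N m = 0 := by
  rw [pCoef, qBinom_gt, mul_zero]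
  have hm : m ≠ 0 := by rintro rfl; simp at h
  rw [add_mul] at h
  omega

theorem pCoef_rec (l n m : ℕ) :
    pCoef l (n + l + 1) (m + 1) =
      pCoef l (n + l) (m + 1) + PowerSeries.X ^ n * pCoef l n m := by
  by_cases h : l * m ≤ n
  · simp only [pCoef]
    have e : l * (m + 1) = l * m + l := by ring
    rw [show n + l + 1 - l * (m + 1) = (n - l * m) + 1 by omega,
      show n + l - l * (m + 1) = n - l * m by omega, qBinom_pascal, mul_add]
    congr 1
    by_cases h2 : n - l * m < m
    · rw [qBinom_gt h2]; simp
    · rw [← mul_assoc, ← mul_assoc, ← pow_add, ← pow_add]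
      congr 2
      have : Nat.choose (m + 1) 2 = m + Nat.choose m 2 := by
        rw [Nat.choose_succ_succ' m 1, Nat.choose_one_right]
      rw [this]
      have : (l + 1) * (m + Nat.choose m 2) = l * m + m + (l + 1) * Nat.choose m 2 := by ring
      rw [this]
      omega
  · have e : (l + 1) * (m + 1) = l * m + l + m + 1 := by ring
    have e' : (l + 1) * m = l * m + m := by ring
    have hm : m ≠ 0 := by rintro rfl; simp at h
    rw [pCoef_big (by omega), pCoef_big (by omega), pCoef_big (by omega)]; simp

/-- The polynomial `P^l_N`. -/
noncomputable def pPoly (l N : ℕ) : Polynomial (PowerSeries ℤ) :=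
  ∑ m ∈ Finset.range (N / (l + 1) + 1),
    (Polynomial.X : Polynomial (PowerSeries ℤ)) ^ m * Polynomial.C (pCoef l N m)

theorem pPoly_eq (l N K : ℕ) (h : N < K) : pPoly l N =
    ∑ m ∈ Finset.range K,
      (Polynomial.X : Polynomial (PowerSeries ℤ)) ^ m * Polynomial.C (pCoef l N m) := by
  apply Finset.sum_subset
  · intro x hx
    have := Nat.div_le_self N (l + 1)
    simp only [Finset.mem_range] at *
    omega
  · intro x _ hx
    simp only [Finset.mem_range, not_lt] at hx
    rw [pCoef_big]
    · simp
    · have := (Nat.div_lt_iff_lt_mul (Nat.succ_pos l)).1 hx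
      rw [mul_comm]; exact this

theorem pPoly_small (l N : ℕ) (h : N ≤ l) : pPoly l N = 1 := by
  rw [pPoly, Nat.div_eq_of_lt (by omega)]
  simp [pCoef_zero]

theorem pPoly_rec (l n : ℕ) : pPoly l (n + l + 1) = pPoly l (n + l) +
    Polynomial.X * Polynomial.C (PowerSeries.X ^ n) * pPoly l n := by
  rw [pPoly_eq l (n + l + 1) (n + l + 2 + 1) (by omega),
    pPoly_eq l (n + l) (n + l + 2 + 1) (by omega),
    pPoly_eq l n (n + l + 2) (by omega), Finset.sum_range_succ' _ (n + l + 2),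
    Finset.sum_range_succ' _ (n + l + 2), pCoef_zero, pCoef_zero, Finset.mul_sum, add_right_comm (Finset.sum _ _), ← Finset.sum_add_distrib]
  congr 1
  apply Finset.sum_congr rfl
  intro m _
  rw [pCoef_rec, map_add, map_mul]
  ring

/-- Validity of a set of positions. -/
def okSet (l : ℕ) (s : Finset ℕ) : Prop := ∀ i ∈ s, ∀ j ∈ s, i < j → i + l < j

open Classical in
/-- Weight of a set of positions. -/
noncomputable def wt (l : ℕ) (s : Finset ℕ) : Polynomial (PowerSeries ℤ) :=
  if okSet l s then Polynomial.X ^ s.card * Polynomial.C (PowerSeries.X ^ (∑ i ∈ s, i)) else 0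

theorem fibChar_eq_sum (l n : ℕ) : fibChar l n = ∑ s ∈ (Finset.range n).powerset, wt l s := by
  classical
  unfold fibChar fibSet
  rw [Finset.sum_filter]
  refine Finset.sum_bij'
    (fun a _ => (Finset.univ.filter fun i => a i = true).map Fin.valEmbedding)
    (fun s _ => fun k => decide ((k : ℕ) ∈ s)) ?_ ?_ ?_ ?_ ?_
  · intro a _
    simp only [Finset.mem_powerset]
    intro x hx
    simp only [Finset.mem_map, Finset.mem_range] at *
    obtain ⟨y, _, rfl⟩ := hx
    exact y.2
  · simp
  · intro a _
    funext k
    simp [Fin.val_inj]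
  · intro s hs
    ext x
    simp only [Finset.mem_map, Finset.mem_filter, Finset.mem_univ, true_and, decide_eq_true_eq,
      Fin.valEmbedding_apply]
    constructor
    · rintro ⟨y, hy, rfl⟩; exact hy
    · intro hx
      exact ⟨⟨x, Finset.mem_range.1 (Finset.mem_powerset.1 hs hx)⟩, hx, rfl⟩
  · intro a _
    simp only [wt, Finset.card_map, Finset.sum_map, Fin.valEmbedding_apply]
    refine if_congr ?_ rfl rfl
    simp only [okSet, Finset.mem_map, Finset.mem_filter, Finset.mem_univ, true_and,
      Fin.valEmbedding_apply]
    constructor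
    · rintro h _ ⟨i, hi, rfl⟩ _ ⟨j, hj, rfl⟩ hij
      by_contra hc
      exact h i j hij (by omega) ⟨hi, hj⟩
    · rintro h i j hij hl ⟨hi, hj⟩
      have := h i ⟨i, hi, rfl⟩ j ⟨j, hj, rfl⟩ hij
      omega

theorem wt_insert_good (l n : ℕ) (s : Finset ℕ) (hs : s ⊆ Finset.range (n - l)) :
    wt l (insert n s) = Polynomial.X * Polynomial.C (PowerSeries.X ^ n) * wt l s := by
  have hlt : ∀ i ∈ s, i + l < n := fun i hi => by
    have := Finset.mem_range.1 (hs hi); omega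
  have hn : n ∉ s := fun h => by have := hlt n h; omega
  have hiff : okSet l (insert n s) ↔ okSet l s := by
    constructor
    · intro h i hi j hj
      exact h i (Finset.mem_insert_of_mem hi) j (Finset.mem_insert_of_mem hj)
    · intro h i hi j hj hij
      rcases Finset.mem_insert.1 hi with hi' | hi' <;>
        rcases Finset.mem_insert.1 hj with hj' | hj'
      · omega
      · have := hlt j hj'; omega
      · have := hlt i hi'; omega
      · exact h i hi' j hj' hij
  unfold wt
  rw [Finset.card_insert_of_notMem hn, Finset.sum_insert hn]
  by_cases hk : okSet l s
  · rw [if_pos hk, if_pos (hiff.2 hk), pow_add, pow_add, map_mul]; ring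
  · rw [if_neg hk, if_neg (fun h => hk (hiff.1 h)), mul_zero]

theorem wt_insert_bad (l n : ℕ) (s : Finset ℕ) (hs : s ⊆ Finset.range n)
    (h : ¬ s ⊆ Finset.range (n - l)) : wt l (insert n s) = 0 := by
  unfold wt
  rw [if_neg]
  intro hok
  apply h
  intro i hi
  have h1 := Finset.mem_range.1 (hs hi)
  have := hok i (Finset.mem_insert_of_mem hi) n (Finset.mem_insert_self _ _) h1
  rw [Finset.mem_range]; omega

theorem fibChar_rec (l n : ℕ) : fibChar l (n + 1) = fibChar l n +
    Polynomial.X * Polynomial.C (PowerSeries.X ^ n) * fibChar l (n - l) := by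
  simp only [fibChar_eq_sum]
  rw [Finset.range_add_one, Finset.sum_powerset_insert (by simp), Finset.mul_sum]
  congr 1
  symm
  calc _ = ∑ s ∈ (Finset.range (n - l)).powerset, wt l (insert n s) := by
        apply Finset.sum_congr rfl
        intro s hs
        rw [wt_insert_good l n s (Finset.mem_powerset.1 hs)]
    _ = _ := by
        apply Finset.sum_subset
        · apply Finset.powerset_mono.2
          intro x hx
          simp only [Finset.mem_range] at *
          omega
        · intro s hs hs'
          rw [Finset.mem_powerset] at hs hs'
          exact wt_insert_bad l n s hs hs'

theorem fibChar_zero (l : ℕ) : fibChar l 0 = 1 := by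
  simp [fibChar_eq_sum, wt, okSet]

theorem fibChar_eq_pPoly (l n : ℕ) : fibChar l n = pPoly l (n + l) := by
  induction n using Nat.strong_induction_on with
  | _ n ih =>
    cases n with
    | zero => rw [fibChar_zero, pPoly_small _ _ (by omega)]
    | succ n =>
      rw [fibChar_rec, ih n (by omega), show n + 1 + l = n + l + 1 by ring, pPoly_rec,
        ih (n - l) (by omega)]
      by_cases h : l ≤ n
      · rw [Nat.sub_add_cancel h]
      · rw [pPoly_small l n (by omega), pPoly_small l (n - l + l) (by omega)]

/-- For all `l ≥ 0` and `n ≥ 0`,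
`χ^l_n(z,q) = P^l_{n+l}(z,q) = Σ_{m=0}^{⌊(n+l)/(l+1)⌋} z^m q^{(l+1)m(m-1)/2} [n+l-lm choose m]_q`;
here `m(m-1)/2 = choose m 2`. -/
theorem fibChar_eq_P (l n : ℕ) :
    fibChar l n =
      ∑ m ∈ Finset.range ((n + l) / (l + 1) + 1),
        (Polynomial.X : Polynomial (PowerSeries ℤ)) ^ m *
          Polynomial.C ((PowerSeries.X : PowerSeries ℤ) ^ ((l + 1) * Nat.choose m 2) *
            qBinom (n + l - l * m) m) := by
  exact fibChar_eq_pPoly l n
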